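/- In the fusion algebra ℱ, for all n, m ∈ ℕ and all finite sequences α₁,…,α_n, β₁,…,β_m of pairs of positive integers: (Π_{i=1}^{n} a_{⟩α_i})·(Π_{i=1}^{n} a_{α_i⟨})·(Π_{j=1}^{m} a_{⟩β_j})·(Π_{j=1}^{m} a_{β_j⟨}) = Σ_{k=0}^{min(n,m)} Σ_{1≤i₁<⋯<i_k≤n} Σ_{j₁,…,j_k pairwise distinct in {1,…,m}} (Π_{j∉{j₁,…,j_k}} a_{⟩β_j})·(Π_{i∉{i₁,…,i_k}} a_{⟩α_i})·(Π_{ℓ=1}^{k} a_{⟩α_{i_ℓ}β_{j_ℓ}})·(Π_{j∉{j₁,…,j_k}} a_{β_j⟨})·(Π_{i∉{i₁,…,i_k}} a_{α_i⟨})·(Π_{ℓ=1}^{k} a_{α_{i_ℓ}β_{j_ℓ}⟨}), where α_{i_ℓ}β_{j_ℓ} denotes the concatenation of the two sequences (the order of the factors within each displayed product is immaterial, since red letters commute with red letters and blue letters with blue letters in ℱ). -/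

import Mathlib

inductive Brk : Type
  | lt  -- ⟨
  | gt  -- ⟩
deriving DecidableEq

/-- finite sequences of pairs of positive integers -/
abbrev PSeq := List (ℕ+ × ℕ+)

/-- the alphabet 𝒜: red letters `a_{•γ}` and blue letters `a_{γ◇}` -/
inductive FLetter : Type
  | red (b : Brk) (γ : PSeq)
  | blue (γ : PSeq) (d : Brk)
deriving DecidableEq

/-- the free associative algebra ℂ⟨𝒜⟩ -/
abbrev FreeA := FreeAlgebra ℂ FLetter

noncomputable def ιA (e : FLetter) : FreeA := FreeAlgebra.ι ℂ e

noncomputable def wordProd (l : List FLetter) : FreeA := (l.map ιA).prod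

/-- the letters of `𝒜_{⟨ ⟩}` -/
def IsCentral : FLetter → Prop
  | .red .lt _ => True
  | .blue _ .gt => True
  | _ => False

/-- the generating relations of the ideal 𝒥_F -/
inductive FRel : FreeA → FreeA → Prop
  | central (e f : FLetter) (he : IsCentral e) :
      FRel (ιA e * ιA f) (ιA f * ιA e)
  | red_comm (b b' : Brk) (γ γ' : PSeq) :
      FRel (ιA (.red b γ) * ιA (.red b' γ')) (ιA (.red b' γ') * ιA (.red b γ))
  | blue_comm (d d' : Brk) (γ γ' : PSeq) :
      FRel (ιA (.blue γ d) * ιA (.blue γ' d')) (ιA (.blue γ' d') * ιA (.blue γ d))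
  | fusion (b d : Brk) (α β : PSeq) (v x : List FLetter) :
      FRel (ιA (.red b α) * wordProd v * ιA (.blue α .lt) * ιA (.red .gt β) *
              wordProd x * ιA (.blue β d))
           (ιA (.red b α) * wordProd v * ιA (.red .gt β) * ιA (.blue α .lt) *
              wordProd x * ιA (.blue β d)
             + ιA (.red b (α ++ β)) * wordProd v * wordProd x * ιA (.blue (α ++ β) d))

/-- the fusion algebra ℱ = ℂ⟨𝒜⟩/𝒥_F -/
abbrev FA := RingQuot FRel

noncomputable def mkF : FreeA →ₐ[ℂ] FA := RingQuot.mkAlgHom ℂ FRel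

/-- the red letter `a_{•γ}` in ℱ -/
noncomputable def Rl (b : Brk) (γ : PSeq) : FA := mkF (ιA (.red b γ))

/-- the blue letter `a_{γ◇}` in ℱ -/
noncomputable def Bll (γ : PSeq) (d : Brk) : FA := mkF (ιA (.blue γ d))

lemma rr_comm (b b' : Brk) (γ γ' : PSeq) : Rl b γ * Rl b' γ' = Rl b' γ' * Rl b γ := by
  unfold Rl
  rw [← map_mul, ← map_mul]
  exact RingQuot.mkAlgHom_rel ℂ (FRel.red_comm b b' γ γ')

lemma bb_comm (d d' : Brk) (γ γ' : PSeq) : Bll γ d * Bll γ' d' = Bll γ' d' * Bll γ d := by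
  unfold Bll
  rw [← map_mul, ← map_mul]
  exact RingQuot.mkAlgHom_rel ℂ (FRel.blue_comm d d' γ γ')

def IsW (v : FA) : Prop := ∃ l, v = mkF (wordProd l)

lemma IsW.mul {v w : FA} (hv : IsW v) (hw : IsW w) : IsW (v * w) := by
  obtain ⟨l, rfl⟩ := hv
  obtain ⟨l', rfl⟩ := hw
  exact ⟨l ++ l', by simp [wordProd]⟩

lemma isW_one : IsW 1 := ⟨[], by simp [wordProd]⟩

lemma isW_R (b : Brk) (γ : PSeq) : IsW (Rl b γ) := ⟨[.red b γ], by simp [wordProd, Rl]⟩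

lemma isW_B (b : Brk) (γ : PSeq) : IsW (Bll γ b) := ⟨[.blue γ b], by simp [wordProd, Bll]⟩

lemma fus (a c : PSeq) {v x : FA} (hv : IsW v) (hx : IsW x) :
    Rl .gt a * v * Bll a .lt * Rl .gt c * x * Bll c .lt =
      Rl .gt a * v * Rl .gt c * Bll a .lt * x * Bll c .lt
      + Rl .gt (a ++ c) * v * x * Bll (a ++ c) .lt := by
  obtain ⟨l, rfl⟩ := hv
  obtain ⟨l', rfl⟩ := hx
  unfold Rl Bll
  simp only [← map_mul, ← map_add]
  exact RingQuot.mkAlgHom_rel ℂ (FRel.fusion .gt .lt a c l l')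

noncomputable def RP (s : Multiset PSeq) : FA :=
  (s.map (Rl .gt)).noncommProd (by
    intro x hx y hy _
    simp only [Set.mem_ofPred_eq, Multiset.mem_map] at hx hy
    obtain ⟨a, _, rfl⟩ := hx
    obtain ⟨b, _, rfl⟩ := hy
    exact rr_comm _ _ _ _)

noncomputable def BP (s : Multiset PSeq) : FA :=
  (s.map (fun γ => Bll γ .lt)).noncommProd (by
    intro x hx y hy _
    simp only [Set.mem_ofPred_eq, Multiset.mem_map] at hx hy
    obtain ⟨a, _, rfl⟩ := hx
    obtain ⟨b, _, rfl⟩ := hy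
    exact bb_comm _ _ _ _)

lemma RP_coe (l : List PSeq) : RP l = (l.map (Rl .gt)).prod := by
  simp [RP]

lemma BP_coe (l : List PSeq) : BP l = (l.map (fun γ => Bll γ .lt)).prod := by
  simp [BP]

lemma RP_zero : RP 0 = 1 := by simp [RP]
lemma BP_zero : BP 0 = 1 := by simp [BP]

lemma RP_add (s t : Multiset PSeq) : RP (s + t) = RP s * RP t := by
  induction s using Quotient.inductionOn
  induction t using Quotient.inductionOn
  simp [RP_coe]

lemma BP_add (s t : Multiset PSeq) : BP (s + t) = BP s * BP t := by
  induction s using Quotient.inductionOn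
  induction t using Quotient.inductionOn
  simp [BP_coe]

lemma RP_sing (a : PSeq) : RP {a} = Rl .gt a := by
  have := RP_coe [a]
  simpa using this
lemma BP_sing (a : PSeq) : BP {a} = Bll a .lt := by
  have := BP_coe [a]
  simpa using this

lemma RP_cons (a : PSeq) (s : Multiset PSeq) : RP (a ::ₘ s) = Rl .gt a * RP s := by
  rw [← Multiset.singleton_add, RP_add, RP_sing]

lemma BP_cons (a : PSeq) (s : Multiset PSeq) : BP (a ::ₘ s) = Bll a .lt * BP s := by
  rw [← Multiset.singleton_add, BP_add, BP_sing]

lemma RP_cons' (a : PSeq) (s : Multiset PSeq) : RP (a ::ₘ s) = RP s * Rl .gt a := by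
  rw [← Multiset.singleton_add, add_comm, RP_add, RP_sing]

lemma BP_cons' (a : PSeq) (s : Multiset PSeq) : BP (a ::ₘ s) = BP s * Bll a .lt := by
  rw [← Multiset.singleton_add, add_comm, BP_add, BP_sing]

lemma isW_RP (s : Multiset PSeq) : IsW (RP s) := by
  induction s using Multiset.induction_on with
  | empty => rw [RP_zero]; exact isW_one
  | cons a s ih => rw [RP_cons]; exact (isW_R _ _).mul ih

lemma isW_BP (s : Multiset PSeq) : IsW (BP s) := by
  induction s using Multiset.induction_on with
  | empty => rw [BP_zero]; exact isW_one
  | cons a s ih => rw [BP_cons]; exact (isW_B _ _).mul ih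

lemma pushA {ι : Type} [DecidableEq ι] (β : ι → PSeq) (a : PSeq) (T : Finset ι) :
    ∀ (v y : FA), IsW v →
    Rl .gt a * v * Bll a .lt * RP (T.val.map β) * BP (T.val.map β) * y =
      Rl .gt a * v * RP (T.val.map β) * Bll a .lt * BP (T.val.map β) * y
      + ∑ j ∈ T, Rl .gt (a ++ β j) * v * RP ((T.erase j).val.map β) *
          BP ((T.erase j).val.map β) * Bll (a ++ β j) .lt * y := by
  induction T using Finset.induction_on with
  | empty => intro v y hv; simp [RP_zero, BP_zero]
  | insert j T hj ih =>
    intro v y hv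
    have e1 : (insert j T).val.map β = β j ::ₘ T.val.map β := by
      rw [Finset.insert_val_of_notMem hj, Multiset.map_cons]
    have e2 : ∀ i ∈ T, ((insert j T).erase i).val.map β = β j ::ₘ (T.erase i).val.map β := by
      intro i hi
      have : i ≠ j := fun h => hj (h ▸ hi)
      rw [Finset.erase_insert_of_ne this.symm, Finset.insert_val_of_notMem (by simp [hj]),
        Multiset.map_cons]
    rw [Finset.sum_insert hj, Finset.erase_insert hj, e1]
    have h1 := fus a (β j) hv (isW_RP (T.val.map β))
    have h2 := ih (v * Rl .gt (β j)) (Bll (β j) .lt * y) (hv.mul (isW_R _ _))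
    have h3 : ∑ i ∈ T, Rl .gt (a ++ β i) * v * RP (((insert j T).erase i).val.map β) *
          BP (((insert j T).erase i).val.map β) * Bll (a ++ β i) .lt * y =
        ∑ i ∈ T, Rl .gt (a ++ β i) * (v * Rl .gt (β j)) * RP ((T.erase i).val.map β) *
          BP ((T.erase i).val.map β) * Bll (a ++ β i) .lt * (Bll (β j) .lt * y) := by
      refine Finset.sum_congr rfl fun i hi => ?_
      rw [e2 i hi, RP_cons, BP_cons']
      have := bb_comm .lt .lt (β j) (a ++ β i)
      simp only [mul_assoc]
      rw [← mul_assoc (Bll (β j) .lt), this, mul_assoc]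
    rw [h3]
    calc _ = (Rl .gt a * v * Bll a .lt * Rl .gt (β j) * RP (T.val.map β) * Bll (β j) .lt) *
              (BP (T.val.map β) * y) := by
            rw [RP_cons, BP_cons]; simp only [mul_assoc]
      _ = Rl .gt a * (v * Rl .gt (β j)) * Bll a .lt * RP (T.val.map β) *
            (BP (β j ::ₘ T.val.map β)) * y +
          Rl .gt (a ++ β j) * v * RP (T.val.map β) *
            (BP ((a ++ β j) ::ₘ T.val.map β)) * y := by
            rw [h1, add_mul, BP_cons, BP_cons]; simp only [mul_assoc]
      _ = (Rl .gt a * (v * Rl .gt (β j)) * Bll a .lt * RP (T.val.map β) *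
            BP (T.val.map β) * (Bll (β j) .lt * y)) +
          Rl .gt (a ++ β j) * v * RP (T.val.map β) *
            (BP ((a ++ β j) ::ₘ T.val.map β)) * y := by
            rw [BP_cons']; simp only [mul_assoc]
      _ = _ := by
            rw [h2, RP_cons, BP_cons', BP_cons']; simp only [mul_assoc]; abel

noncomputable def Ph (s : Multiset PSeq) : FA := RP s * BP s

lemma Ph_cons (a : PSeq) (s : Multiset PSeq) :
    Ph (a ::ₘ s) = Rl .gt a * Ph s * Bll a .lt := by
  rw [Ph, Ph, RP_cons, BP_cons']; simp only [mul_assoc]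

lemma key {ι : Type} [DecidableEq ι] (β : ι → PSeq) (a : PSeq) (A : Multiset PSeq) (T : Finset ι) :
    Ph (a ::ₘ A) * Ph (T.val.map β) =
      Rl .gt a * (Ph A * Ph (T.val.map β)) * Bll a .lt
      + ∑ j ∈ T, Rl .gt (a ++ β j) * (Ph A * Ph ((T.erase j).val.map β)) *
          Bll (a ++ β j) .lt := by
  have hc : ∀ g, Rl .gt g * RP A = RP A * Rl .gt g := fun g => by
    rw [← RP_cons, RP_cons']
  have hb : Bll a .lt * BP (T.val.map β) = BP (T.val.map β) * Bll a .lt := by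
    rw [← BP_cons, BP_cons']
  have h := congrArg (fun z => RP A * z) (pushA β a T (BP A) 1 (isW_BP A))
  simp only [mul_one, mul_add, Finset.mul_sum] at h
  have e : Ph (a ::ₘ A) * Ph (T.val.map β) = RP A * (Rl .gt a * BP A * Bll a .lt *
      RP (T.val.map β) * BP (T.val.map β)) := by
    simp only [Ph]; rw [RP_cons', BP_cons']; simp only [mul_assoc]
  rw [e, h]
  congr 1
  · simp only [Ph, mul_assoc]
    rw [hb, ← mul_assoc (RP A), ← hc]; simp only [mul_assoc]
  · refine Finset.sum_congr rfl fun j _ => ?_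
    simp only [Ph, mul_assoc]
    rw [← mul_assoc (RP A), ← hc]; simp only [mul_assoc]

open scoped Classical in
noncomputable def SS {n m k : ℕ} (α : Fin n → PSeq) (β : Fin m → PSeq) (T : Finset (Fin m))
    (iF : Fin k → Fin n) (jF : Fin k → Fin m) : Multiset PSeq :=
  (T.filter (fun j => ∀ ℓ, jF ℓ ≠ j)).val.map β +
  (Finset.univ.filter (fun i => ∀ ℓ, iF ℓ ≠ i)).val.map α +
  (Finset.univ : Finset (Fin k)).val.map (fun ℓ => α (iF ℓ) ++ β (jF ℓ))

lemma univ_map_succ {n : ℕ} {X : Type} (f : Fin (n + 1) → X) :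
    (Finset.univ : Finset (Fin (n + 1))).val.map f =
      f 0 ::ₘ (Finset.univ : Finset (Fin n)).val.map (fun i => f i.succ) := by
  rw [Fin.univ_succ]
  simp [Multiset.map_map, Function.comp_def]

open scoped Classical in
lemma SS_succ {n m k : ℕ} (α : Fin (n + 1) → PSeq) (β : Fin m → PSeq) (T : Finset (Fin m))
    (iF : Fin k → Fin n) (jF : Fin k → Fin m) :
    SS α β T (fun l => (iF l).succ) jF = α 0 ::ₘ SS (fun i => α i.succ) β T iF jF := by
  have h : (Finset.univ.filter (fun i : Fin (n + 1) => ∀ ℓ, (iF ℓ).succ ≠ i)) =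
      Finset.cons 0 ((Finset.univ.filter (fun i : Fin n => ∀ ℓ, iF ℓ ≠ i)).map
        (Fin.succEmb n)) (by simp) := by
    ext i
    refine Fin.cases ?_ (fun i => ?_) i <;> simp [Fin.succ_ne_zero]
  rw [SS, SS, h]
  simp [Multiset.map_map, Function.comp_def]

open scoped Classical in
lemma SS_cons {n m k : ℕ} (α : Fin (n + 1) → PSeq) (β : Fin m → PSeq) (T : Finset (Fin m))
    (iF : Fin k → Fin n) (j : Fin m) (jF : Fin k → Fin m) :
    SS α β T (Fin.cons 0 (fun l => (iF l).succ) : Fin (k + 1) → Fin (n + 1))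
      (Fin.cons j jF : Fin (k + 1) → Fin m) =
      (α 0 ++ β j) ::ₘ SS (fun i => α i.succ) β (T.erase j) iF jF := by
  have h : (Finset.univ.filter (fun i : Fin (n + 1) => ∀ ℓ,
      (Fin.cons 0 (fun l => (iF l).succ) : Fin (k + 1) → Fin (n + 1)) ℓ ≠ i)) =
      ((Finset.univ.filter (fun i : Fin n => ∀ ℓ, iF ℓ ≠ i)).map
        (Fin.succEmb n)) := by
    ext i
    refine Fin.cases ?_ (fun i => ?_) i <;> simp [Fin.forall_fin_succ, Fin.succ_ne_zero, eq_comm]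
  have h2 : T.filter (fun i => ∀ ℓ, (Fin.cons j jF : Fin (k + 1) → Fin m) ℓ ≠ i) =
      (T.erase j).filter (fun i => ∀ ℓ, jF ℓ ≠ i) := by
    ext i
    simp only [Finset.mem_filter, Fin.forall_fin_succ, Fin.cons_zero, Fin.cons_succ,
      Finset.mem_erase]
    tauto
  rw [SS, SS, h, h2, univ_map_succ, Multiset.add_cons, Finset.map_val, Multiset.map_map]
  simp only [Fin.cons_zero, Fin.cons_succ]
  rfl

open scoped Classical in
lemma split_inj {M : Type} [AddCommMonoid M] {k m : ℕ} (T : Finset (Fin m))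
    (G : (Fin (k + 1) → Fin m) → M) :
    ∑ jF ∈ Finset.univ.filter (fun f : Fin (k + 1) → Fin m =>
        Function.Injective f ∧ ∀ l, f l ∈ T), G jF =
    ∑ j ∈ T, ∑ jF ∈ Finset.univ.filter (fun f : Fin k → Fin m =>
        Function.Injective f ∧ ∀ l, f l ∈ T.erase j), G (Fin.cons j jF) := by
  rw [Finset.sum_sigma']
  symm
  refine Finset.sum_bij' (fun p _ => (Fin.cons p.1 p.2 : Fin (k + 1) → Fin m))
    (fun f _ => ⟨f 0, Fin.tail f⟩) ?_ ?_ ?_ ?_ ?_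
  · rintro ⟨j, f⟩ h
    simp only [Finset.mem_sigma, Finset.mem_filter, Finset.mem_univ, true_and,
      Finset.mem_erase] at h ⊢
    refine ⟨Fin.cons_injective_iff.2 ⟨?_, h.2.1⟩, ?_⟩
    · rintro ⟨l, hl⟩
      exact (h.2.2 l).1 hl
    · intro l
      refine Fin.cases ?_ (fun l => ?_) l
      · simpa using h.1
      · simpa using (h.2.2 l).2
  · intro f h
    simp only [Finset.mem_sigma, Finset.mem_filter, Finset.mem_univ, true_and,
      Finset.mem_erase] at h ⊢
    refine ⟨h.2 0, fun a b hab => Fin.succ_injective _ (h.1 hab), fun l => ⟨?_, h.2 _⟩⟩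
    intro hl
    exact Fin.succ_ne_zero _ (h.1 hl)
  · rintro ⟨j, f⟩ h
    simp
  · intro f h
    simp
  · rintro ⟨j, f⟩ h
    simp

open scoped Classical in
lemma split_mono {M : Type} [AddCommMonoid M] {k n : ℕ} (G : (Fin k → Fin (n + 1)) → M) :
    ∑ f ∈ Finset.univ.filter (fun f : Fin k → Fin (n + 1) => StrictMono f), G f =
    ∑ f ∈ Finset.univ.filter (fun f : Fin k → Fin n => StrictMono f), G (fun l => (f l).succ) +
    ∑ f ∈ Finset.univ.filter (fun f : Fin k → Fin (n + 1) => StrictMono f ∧ ∃ l, f l = 0),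
      G f := by
  rw [← Finset.sum_filter_not_add_sum_filter _ (fun f => ∃ l, f l = 0)]
  rw [Finset.filter_filter, Finset.filter_filter]
  congr 1
  symm
  refine Finset.sum_bij (fun f _ => fun l => (f l).succ) ?_ ?_ ?_ ?_
  · intro f h
    simp only [Finset.mem_filter, Finset.mem_univ, true_and] at h ⊢
    exact ⟨fun a b hab => Fin.succ_lt_succ_iff.2 (h hab), by simp [Fin.succ_ne_zero]⟩
  · intro f _ g _ h
    funext l
    exact Fin.succ_injective _ (congrFun h l)
  · intro f h
    simp only [Finset.mem_filter, Finset.mem_univ, true_and, not_exists] at h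
    refine ⟨fun l => (f l).pred (h.2 l), ?_, by simp⟩
    simp only [Finset.mem_filter, Finset.mem_univ, true_and]
    intro a b hab
    exact Fin.pred_lt_pred_iff.2 (h.1 hab)
  · intro f _; rfl

open scoped Classical in
lemma split_mono0 {M : Type} [AddCommMonoid M] {k n : ℕ} (G : (Fin (k + 1) → Fin (n + 1)) → M) :
    ∑ f ∈ Finset.univ.filter (fun f : Fin (k + 1) → Fin (n + 1) => StrictMono f ∧ ∃ l, f l = 0),
      G f =
    ∑ f ∈ Finset.univ.filter (fun f : Fin k → Fin n => StrictMono f),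
      G (Fin.cons 0 (fun l => (f l).succ)) := by
  symm
  refine Finset.sum_bij (fun f _ => (Fin.cons 0 (fun l => (f l).succ))) ?_ ?_ ?_ ?_
  · intro f h
    simp only [Finset.mem_filter, Finset.mem_univ, true_and] at h ⊢
    refine ⟨?_, 0, by simp⟩
    intro a b
    refine Fin.cases ?_ (fun a => ?_) a <;> refine Fin.cases ?_ (fun b => ?_) b
    · simp
    · simp
    · simp
    · intro hab
      simpa using h (Fin.succ_lt_succ_iff.1 hab)
  · intro f _ g _ h
    funext l
    have := congrFun h l.succ
    simpa using this
  · intro f h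
    simp only [Finset.mem_filter, Finset.mem_univ, true_and] at h
    obtain ⟨h, l, hl⟩ := h
    have h0 : f 0 = 0 := by
      have := h.monotone (Fin.zero_le l)
      rw [hl] at this
      exact Fin.le_zero_iff.1 this
    have hs : ∀ l : Fin k, f l.succ ≠ 0 := fun l => by
      have := h (Fin.succ_pos l)
      rw [h0] at this
      exact this.ne'
    refine ⟨fun l => (f l.succ).pred (hs l), ?_, ?_⟩
    · simp only [Finset.mem_filter, Finset.mem_univ, true_and]
      intro a b hab
      exact Fin.pred_lt_pred_iff.2 (h (Fin.succ_lt_succ_iff.2 hab))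
    · funext l
      refine Fin.cases ?_ (fun l => ?_) l
      · simp [h0]
      · simp
  · intro f _; rfl

open scoped Classical in
lemma mainT (m : ℕ) (β : Fin m → PSeq) (n : ℕ) : ∀ (α : Fin n → PSeq) (T : Finset (Fin m)),
    Ph ((Finset.univ : Finset (Fin n)).val.map α) * Ph (T.val.map β) =
    ∑ k ∈ Finset.range (n + 1),
      ∑ iF ∈ Finset.univ.filter (fun f : Fin k → Fin n => StrictMono f),
        ∑ jF ∈ Finset.univ.filter (fun f : Fin k → Fin m =>
          Function.Injective f ∧ ∀ l, f l ∈ T), Ph (SS α β T iF jF) := by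
  induction n with
  | zero =>
    intro α T
    have a1 : (Finset.univ.filter (fun f : Fin 0 → Fin 0 => StrictMono f)) = {Fin.elim0} := by
      ext f
      simp only [Finset.mem_filter, Finset.mem_univ, true_and, Finset.mem_singleton]
      exact ⟨fun _ => Subsingleton.elim _ _, fun _ a => a.elim0⟩
    have a2 : (Finset.univ.filter (fun f : Fin 0 → Fin m =>
          Function.Injective f ∧ ∀ l, f l ∈ T)) = {Fin.elim0} := by
      ext f
      simp only [Finset.mem_filter, Finset.mem_univ, true_and, Finset.mem_singleton]
      exact ⟨fun _ => Subsingleton.elim _ _, fun _ => ⟨fun a => a.elim0, fun a => a.elim0⟩⟩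
    rw [Finset.sum_range_one, a1, Finset.sum_singleton, a2, Finset.sum_singleton]
    simp [SS, Ph, RP_zero, BP_zero]
  | succ n ih =>
    intro α T
    rw [univ_map_succ, key]
    simp_rw [split_mono]
    rw [Finset.sum_add_distrib]
    congr 1
    · rw [Finset.sum_range_succ]
      have : (Finset.univ.filter (fun f : Fin (n + 1) → Fin n => StrictMono f)) = ∅ := by
        rw [Finset.filter_eq_empty_iff]
        intro f _ hf
        have := Fintype.card_le_of_injective f hf.injective
        simp at this
      rw [this, Finset.sum_empty, add_zero, ih]
      simp_rw [Finset.mul_sum, Finset.sum_mul, SS_succ, Ph_cons]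
    · rw [Finset.sum_range_succ']
      have : (Finset.univ.filter (fun f : Fin 0 → Fin (n + 1) =>
          StrictMono f ∧ ∃ l, f l = 0)) = ∅ := by
        rw [Finset.filter_eq_empty_iff]
        rintro f _ ⟨_, l, _⟩
        exact l.elim0
      rw [this, Finset.sum_empty, add_zero]
      simp_rw [split_mono0, split_inj, SS_cons, Ph_cons, ih, Finset.mul_sum, Finset.sum_mul]
      rw [Finset.sum_comm]
      refine Finset.sum_congr rfl fun k _ => ?_
      rw [Finset.sum_comm]

open scoped Classical in
/-- the product formula in the fusion algebra ℱ:
`(Π a_{⟩α_i})(Π a_{α_i⟨})(Π a_{⟩β_j})(Π a_{β_j⟨})` equals the sum, over `k`,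
over strictly increasing `i₁<⋯<i_k` and pairwise distinct `j₁,…,j_k`, of
`(Π_{j∉J} a_{⟩β_j})(Π_{i∉I} a_{⟩α_i})(Π_ℓ a_{⟩α_{i_ℓ}β_{j_ℓ}})`
times the analogous blue product. -/
theorem fusion_product_formula (n m : ℕ) (α : Fin n → PSeq) (β : Fin m → PSeq) :
    ((List.finRange n).map fun i => Rl .gt (α i)).prod *
      ((List.finRange n).map fun i => Bll (α i) .lt).prod *
      ((List.finRange m).map fun j => Rl .gt (β j)).prod *
      ((List.finRange m).map fun j => Bll (β j) .lt).prod =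
    ∑ k ∈ Finset.range (min n m + 1),
      ∑ iF ∈ Finset.univ.filter (fun f : Fin k → Fin n => StrictMono f),
        ∑ jF ∈ Finset.univ.filter (fun f : Fin k → Fin m => Function.Injective f),
          (((List.finRange m).filter fun j => decide (∀ ℓ, jF ℓ ≠ j)).map
              fun j => Rl .gt (β j)).prod *
          (((List.finRange n).filter fun i => decide (∀ ℓ, iF ℓ ≠ i)).map
              fun i => Rl .gt (α i)).prod *
          ((List.finRange k).map fun ℓ => Rl .gt (α (iF ℓ) ++ β (jF ℓ))).prod *
          ((((List.finRange m).filter fun j => decide (∀ ℓ, jF ℓ ≠ j)).map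
              fun j => Bll (β j) .lt).prod *
            (((List.finRange n).filter fun i => decide (∀ ℓ, iF ℓ ≠ i)).map
              fun i => Bll (α i) .lt).prod *
            ((List.finRange k).map fun ℓ => Bll (α (iF ℓ) ++ β (jF ℓ)) .lt).prod) := by
  have h := mainT m β n α Finset.univ
  have hR : ∀ (k : ℕ) (f : Fin k → PSeq) (p : Fin k → Prop) [DecidablePred p],
      RP ((Finset.univ.filter p).val.map f) =
      (((List.finRange k).filter fun i => decide (p i)).map fun i => Rl .gt (f i)).prod := by
    intro k f p _
    have : (Finset.univ.filter p).val.map f =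
      (((List.finRange k).filter fun i => decide (p i)).map f : List PSeq) := rfl
    rw [this, RP_coe, List.map_map]; rfl
  have hB : ∀ (k : ℕ) (f : Fin k → PSeq) (p : Fin k → Prop) [DecidablePred p],
      BP ((Finset.univ.filter p).val.map f) =
      (((List.finRange k).filter fun i => decide (p i)).map fun i => Bll (f i) .lt).prod := by
    intro k f p _
    have : (Finset.univ.filter p).val.map f =
      (((List.finRange k).filter fun i => decide (p i)).map f : List PSeq) := rfl
    rw [this, BP_coe, List.map_map]; rfl
  have hR' : ∀ (k : ℕ) (f : Fin k → PSeq),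
      RP ((Finset.univ : Finset (Fin k)).val.map f) =
      ((List.finRange k).map fun i => Rl .gt (f i)).prod := by
    intro k f
    have : (Finset.univ : Finset (Fin k)).val.map f = ((List.finRange k).map f : List PSeq) := rfl
    rw [this, RP_coe, List.map_map]; rfl
  have hB' : ∀ (k : ℕ) (f : Fin k → PSeq),
      BP ((Finset.univ : Finset (Fin k)).val.map f) =
      ((List.finRange k).map fun i => Bll (f i) .lt).prod := by
    intro k f
    have : (Finset.univ : Finset (Fin k)).val.map f = ((List.finRange k).map f : List PSeq) := rfl
    rw [this, BP_coe, List.map_map]; rfl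
  simp only [Ph, SS, RP_add, BP_add, hR, hB, hR', hB', Finset.mem_univ, implies_true,
    and_true] at h
  rw [mul_assoc (_ * _), h]
  symm
  refine Finset.sum_subset (Finset.range_mono (by omega)) ?_
  intro k hk hk'
  simp only [Finset.mem_range] at hk hk'
  refine Finset.sum_eq_zero fun iF _ => ?_
  refine Finset.sum_eq_zero fun jF hj => ?_
  have := Fintype.card_le_of_injective jF (Finset.mem_filter.1 hj).2
  simp at this
  omega
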